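/- There exists a universal constant K > 0 with the following property (Theorem 5(b) with the adaptive weights made explicit). Let d, m ≥ 1 and n₁,…,n_m ≥ 1 be integers, let n > 0 and β̄ > 0 be reals, Γ > 0, and let C ⊆ ℝ^d be a nonempty compact convex set of Euclidean diameter D > 0. For each i ∈ {1,…,m} and j ∈ {1,…,n_i}, let ℓ_{ij} : ℝ^d → ℝ be convex, differentiable, and Γ-Lipschitz on C; set L_i = ∑_{j=1}^{n_i} ℓ_{ij} and let θ*_i be a minimizer of L_i over C. Define the adaptive weights ω_i = n_i^{-1/4} / √( (∑_{i'=1}^m n_{i'}^{1/2}) / (n β̄) ), set T = ⌈(2/d)·(∑_{i=1}^m n_i²)/(∑_{i=1}^m 1/ω_i²)⌉, let (ξ_i⁽ᵗ⁾)_{i ∈ [m], t ∈ [T]} be independent standard Gaussian random vectors in ℝ^d, let θ_i⁽⁰⁾ ∈ C be deterministic, and define θ_i⁽ᵗ⁾ = Π_C( θ_i⁽ᵗ⁻¹⁾ − η_i⁽ᵗ⁾( ω_i ∇L_i(θ_i⁽ᵗ⁻¹⁾) + Γ√(T/2)·ξ_i⁽ᵗ⁾ ) ) with η_i⁽ᵗ⁾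 = D/( Γ·√(ω_i² n_i² + T d/2) · √t ). Then ∑_{i=1}^m E[L_i(θ_i⁽ᵀ⁾)] − ∑_{i=1}^m L_i(θ*_i) ≤ K · D · Γ · (1 + log T) · √( m d / (n β̄) ) · ∑_{i=1}^m n_i^{1/2}. -/

import Mathlib

open MeasureTheory ProbabilityTheory

/-!
For a single task, testing the projected step against any point `u` of `C` that is determined by the
past gives a descent inequality in which the noise contributes nothing to first order. Taking for
`u` the iterate `θ s` itself bounds the weighted sum `w ∑ t ∈ [s, T), E[f (θ t) - f (θ s)]` by
`O (D G (T - s) / √T)`, where `D` bounds the diameter of `C` and `G ^ 2` the second moment of the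
noisy gradients. Comparing averages over longer and longer suffixes (Shamir and Zhang) then turns
the regret bound against the minimizer into a bound for a single late iterate, at the price of a
factor `log T`. Dividing by the task weight `w`, the sum over tasks is controlled by Cauchy-Schwarz:
the choice of `T` balances the gradient part of the step size against its noise part.
-/

section RealSequences

lemma inv_sqrt_succ_le (n : ℕ) : 1 / √(n + 1 : ℝ) ≤ 2 * (√(n + 1 : ℝ) - √n) := by
  have hpos : 0 < √(n + 1 : ℝ) := by positivity
  rw [div_le_iff₀ hpos]
  have hn := Real.sq_sqrt (Nat.cast_nonneg (α := ℝ) n)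
  have hn' := Real.sq_sqrt (show (0 : ℝ) ≤ n + 1 by positivity)
  nlinarith [sq_nonneg (√(n + 1 : ℝ) - √n)]

lemma sqrt_sub_sqrt_le_div_sqrt {x y : ℝ} (hx : 0 ≤ x) (hxy : x ≤ y) :
    √y - √x ≤ (y - x) / √y := by
  rcases (hx.trans hxy).eq_or_lt with rfl | hy
  · simp
  rw [le_div_iff₀ (Real.sqrt_pos.2 hy)]
  nlinarith [Real.sq_sqrt hx, Real.sq_sqrt hy.le, Real.sqrt_le_sqrt hxy, Real.sqrt_nonneg x]

lemma sum_Ico_le_of_le_sqrt_telescoping {x e : ℕ → ℝ} {s T : ℕ}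
    (he : ∀ t ∈ Finset.Ico s T, e t ≤ 1)
    (hx : ∀ t ∈ Finset.Ico s T, x t ≤ √(t + 1) / 2 * (e t - e (t + 1)) + 1 / √(t + 1))
    (hsT : s ≤ T) :
    ∑ t ∈ Finset.Ico s T, x t ≤ √s / 2 * e s - √T / 2 * e T + 5 / 2 * (√T - √s) := by
  induction T, hsT using Nat.le_induction with
  | base => simp
  | succ n hn ih =>
    have hsub : Finset.Ico s n ⊆ Finset.Ico s (n + 1) := Finset.Ico_subset_Ico_right n.le_succ
    have hn_mem : n ∈ Finset.Ico s (n + 1) := by simp [hn]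
    rw [Finset.sum_Ico_succ_top hn]
    have hprev := ih (fun t ht => he t (hsub ht)) (fun t ht => hx t (hsub ht))
    have hsqrt : √(n : ℝ) ≤ √(n + 1 : ℝ) := Real.sqrt_le_sqrt (by linarith)
    push_cast
    nlinarith [hx n hn_mem, inv_sqrt_succ_le n,
      mul_nonneg (sub_nonneg.2 hsqrt) (sub_nonneg.2 (he n hn_mem))]

lemma sum_Ico_le_div_sqrt {x e : ℕ → ℝ} {s T : ℕ} (he : ∀ t ∈ Finset.Icc s T, e t ∈ Set.Icc 0 1)
    (hs : √s * e s = 0)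
    (hx : ∀ t ∈ Finset.Ico s T, x t ≤ √(t + 1) / 2 * (e t - e (t + 1)) + 1 / √(t + 1))
    (hsT : s ≤ T) :
    ∑ t ∈ Finset.Ico s T, x t ≤ 5 / 2 / √T * (T - s) := by
  have htel := sum_Ico_le_of_le_sqrt_telescoping
    (fun t ht => (he t (Finset.Ico_subset_Icc_self ht)).2) hx hsT
  have hT : 0 ≤ √T * e T := mul_nonneg (Real.sqrt_nonneg _) (he T (by simp [hsT])).1
  have hsqrt := sqrt_sub_sqrt_le_div_sqrt s.cast_nonneg (Nat.cast_le (α := ℝ).2 hsT)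
  calc _ ≤ 5 / 2 * (√T - √s) := by linarith
    _ ≤ 5 / 2 * ((T - s) / √T) := by gcongr
    _ = _ := by ring

/- If `S k` is the average of `b 0, …, b k`, the hypothesis says `S k ≤ b k + c`, and
`S k - S (k + 1) = (S (k + 1) - b (k + 1)) / (k + 1)`. -/
lemma le_average_add_harmonic {b : ℕ → ℝ} {c : ℝ} {n : ℕ}
    (hb : ∀ k ≤ n, ∑ j ∈ Finset.range (k + 1), (b j - b k) ≤ c * (k + 1)) :
    b 0 ≤ (∑ j ∈ Finset.range (n + 1), b j) / (n + 1) + c * harmonic n := by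
  induction n with
  | zero => simp
  | succ n ih =>
    have hlast := hb (n + 1) le_rfl
    refine (ih fun k hk => hb k (by lia)).trans ?_
    rw [Finset.sum_sub_distrib, Finset.sum_const, Finset.card_range, nsmul_eq_mul] at hlast
    rw [Finset.sum_range_succ b (n + 1)] at hlast ⊢
    rw [harmonic_succ]
    push_cast at hlast ⊢
    set S := ∑ j ∈ Finset.range (n + 1), b j
    have hdrop : S / (n + 1) ≤ (S + b (n + 1)) / (n + 1 + 1) + c * (n + 1 : ℝ)⁻¹ := by
      have hn : (0 : ℝ) < n + 1 := by positivity
      rw [← div_eq_mul_inv, div_add_div _ _ (by positivity) hn.ne',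
        div_le_div_iff₀ hn (by positivity)]
      nlinarith
    linarith

lemma last_le_of_suffix_sums_le {a : ℕ → ℝ} {c : ℝ} {n : ℕ} (hc : 0 ≤ c)
    (hsuffix : ∀ s ≤ n, ∑ t ∈ Finset.Ico s (n + 1), (a t - a s) ≤ c * ((n + 1 : ℕ) - s))
    (htotal : ∑ t ∈ Finset.range (n + 1), a t ≤ c * (n + 1)) :
    a n ≤ c * (2 + Real.log (n + 1)) := by
  have hreflect : ∀ k ≤ n, ∑ j ∈ Finset.range (k + 1), (a (n - j) - a (n - k)) ≤ c * (k + 1) := by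
    intro k hk
    have hs := hsuffix (n - k) (Nat.sub_le n k)
    rw [Finset.sum_Ico_eq_sum_range, show n + 1 - (n - k) = k + 1 by lia,
      ← Finset.sum_range_reflect] at hs
    convert hs using 1
    · refine Finset.sum_congr rfl fun j hj => ?_
      rw [Finset.mem_range] at hj
      congr 2
      lia
    · push_cast [hk]
      ring
  have hmain := le_average_add_harmonic (b := fun j => a (n - j)) hreflect
  have hrev : ∑ j ∈ Finset.range (n + 1), a (n - j) = ∑ t ∈ Finset.range (n + 1), a t :=
    Finset.sum_range_reflect a (n + 1)
  rw [hrev] at hmain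
  have havg : (∑ t ∈ Finset.range (n + 1), a t) / (n + 1) ≤ c := by
    rwa [div_le_iff₀ (by positivity)]
  have hharm : (harmonic n : ℝ) ≤ 1 + Real.log (n + 1) := by
    refine le_trans ?_ (by exact_mod_cast harmonic_le_one_add_log (n + 1))
    rw [harmonic_succ]
    push_cast
    have : (0 : ℝ) ≤ (n + 1 : ℝ)⁻¹ := by positivity
    linarith
  calc a n ≤ c + c * harmonic n := by simpa using hmain.trans (by gcongr)
    _ ≤ c + c * (1 + Real.log (n + 1)) := by gcongr
    _ = _ := by ring

end RealSequences

section ProjectedStep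

variable {E : Type*} [NormedAddCommGroup E] [InnerProductSpace ℝ E]

/-- `p` is a metric projection onto `C`: it sends every point to a nearest point of `C`. Only the
nearest-point property is recorded, in the form in which projections are given. -/
def IsNearestPointMap (p : E → E) (C : Set E) : Prop :=
  ∀ x, p x ∈ C ∧ ∀ y ∈ C, ‖x - p x‖ ≤ ‖x - y‖

namespace IsNearestPointMap

variable {p : E → E} {C : Set E}

lemma inner_sub_le_zero (hp : IsNearestPointMap p C) (hC : Convex ℝ C) (x : E) {y : E}
    (hy : y ∈ C) : inner ℝ (x - p x) (y - p x) ≤ 0 := by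
  refine (norm_eq_iInf_iff_real_inner_le_zero hC (hp x).1).1 ?_ y hy
  have : Nonempty C := ⟨⟨y, hy⟩⟩
  refine le_antisymm (le_ciInf fun z => (hp x).2 z z.2) ?_
  exact ciInf_le ⟨0, by rintro _ ⟨z, rfl⟩; positivity⟩ (⟨p x, (hp x).1⟩ : C)

lemma lipschitzWith_one (hp : IsNearestPointMap p C) (hC : Convex ℝ C) : LipschitzWith 1 p := by
  refine LipschitzWith.mk_one fun x y => ?_
  rw [dist_eq_norm, dist_eq_norm]
  have hx := hp.inner_sub_le_zero hC x (hp y).1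
  have hy := hp.inner_sub_le_zero hC y (hp x).1
  have hsq : ‖p x - p y‖ ^ 2 ≤ inner ℝ (x - y) (p x - p y) := by
    rw [← real_inner_self_eq_norm_sq]
    simp only [inner_sub_left, inner_sub_right] at hx hy ⊢
    linarith
  rcases (norm_nonneg (p x - p y)).eq_or_lt with h | h
  · rw [← h]; positivity
  · nlinarith [hsq.trans (real_inner_le_norm (x - y) (p x - p y))]

lemma norm_sub_sq_le (hp : IsNearestPointMap p C) (hC : Convex ℝ C) (x v : E) {u : E}
    (hu : u ∈ C) :
    ‖p (x - v) - u‖ ^ 2 ≤ ‖x - u‖ ^ 2 - 2 * inner ℝ v (x - u) +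
      (2 * inner ℝ v (x - p (x - v)) - ‖x - p (x - v)‖ ^ 2) := by
  have h := hp.inner_sub_le_zero hC (x - v) hu
  simp only [← real_inner_self_eq_norm_sq, inner_sub_left, inner_sub_right] at h ⊢
  linarith [real_inner_comm x u, real_inner_comm x (p (x - v)), real_inner_comm u (p (x - v))]

lemma norm_sub_sq_le_inner (hp : IsNearestPointMap p C) (hC : Convex ℝ C) {x : E} (hx : x ∈ C)
    (v : E) : ‖x - p (x - v)‖ ^ 2 ≤ inner ℝ v (x - p (x - v)) := by
  have h := hp.norm_sub_sq_le hC x v hx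
  rw [norm_sub_rev, sub_self, norm_zero, inner_zero_right] at h
  linarith

end IsNearestPointMap

variable {C : Set E} {f : E → ℝ} {x y : E}

lemma hasDerivAt_comp_lineMap_zero [CompleteSpace E] (hd : DifferentiableAt ℝ f x) (y : E) :
    HasDerivAt (fun t : ℝ => f (AffineMap.lineMap x y t)) (inner ℝ (gradient f x) (y - x)) 0 := by
  have hgrad : HasFDerivAt f (InnerProductSpace.toDual ℝ E (gradient f x))
      (AffineMap.lineMap x y (0 : ℝ)) := by
    simpa using hd.hasGradientAt.hasFDerivAt
  exact hgrad.comp_hasDerivAt 0 (AffineMap.hasDerivAt_lineMap (a := x) (b := y))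

variable [CompleteSpace E]

lemma sub_le_inner_gradient (hf : ConvexOn ℝ C f) (hd : DifferentiableAt ℝ f x)
    (hx : x ∈ C) (hy : y ∈ C) : f x - f y ≤ inner ℝ (gradient f x) (x - y) := by
  have hsub : Set.Icc (0 : ℝ) 1 ⊆ AffineMap.lineMap x y ⁻¹' C := fun t ht =>
    hf.1.lineMap_mem hx hy ht
  have hline : ConvexOn ℝ (Set.Icc (0 : ℝ) 1) (f ∘ AffineMap.lineMap x y) :=
    (hf.comp_affineMap (AffineMap.lineMap x y)).subset hsub (convex_Icc 0 1)
  have hslope := hline.le_slope_of_hasDerivAt (by simp) (by simp) one_pos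
    (hasDerivAt_comp_lineMap_zero hd y)
  rw [slope_def_field, ← neg_sub x y, inner_neg_right] at hslope
  simp only [Function.comp_apply, AffineMap.lineMap_apply_one, AffineMap.lineMap_apply_zero,
    sub_zero, div_one] at hslope
  linarith

lemma inner_gradient_le (hC : Convex ℝ C) {M : NNReal} (hf : LipschitzOnWith M f C)
    (hd : DifferentiableAt ℝ f x) (hx : x ∈ C) (hy : y ∈ C) :
    inner ℝ (gradient f x) (x - y) ≤ M * ‖x - y‖ := by
  have hderiv := (hasDerivAt_comp_lineMap_zero hd y).neg.hasDerivWithinAt (s := Set.Ioi 0)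
  rw [← neg_sub x y, inner_neg_right, neg_neg,
    hasDerivWithinAt_iff_tendsto_slope' (by simp)] at hderiv
  refine le_of_tendsto hderiv ?_
  filter_upwards [Ioo_mem_nhdsGT (one_pos (α := ℝ))] with t ht
  have hmem := hC.lineMap_mem hx hy ⟨ht.1.le, ht.2.le⟩
  have hdist := hf.dist_le_mul x hx _ hmem
  rw [dist_left_lineMap, Real.dist_eq, Real.norm_of_nonneg ht.1.le, dist_eq_norm] at hdist
  rw [slope_def_field, sub_zero, div_le_iff₀ ht.1]
  simp only [Pi.neg_apply, AffineMap.lineMap_apply_zero]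
  linarith [le_abs_self (f x - f (AffineMap.lineMap x y t))]

/-- One step of projected gradient descent on `f` from `x`, with step size `η`, gradient weight `w`
and additive gradient noise `σ • z`. -/
noncomputable def noisyProjGradStep (p : E → E) (f : E → ℝ) (η w σ : ℝ) (x z : E) : E :=
  p (x - η • (w • gradient f x + σ • z))

variable {p : E → E} {M : NNReal} {η w σ : ℝ}

lemma inner_weighted_gradient_add_noise_le (hC : Convex ℝ C) (hf : LipschitzOnWith M f C)
    (hd : DifferentiableAt ℝ f x) (hx : x ∈ C) (hy : y ∈ C) (hw : 0 ≤ w) (hσ : 0 ≤ σ) (z : E) :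
    inner ℝ (w • gradient f x + σ • z) (x - y) ≤ (w * M + σ * ‖z‖) * ‖x - y‖ := by
  rw [inner_add_left, real_inner_smul_left, real_inner_smul_left, add_mul, mul_assoc, mul_assoc]
  gcongr
  · exact inner_gradient_le hC hf hd hx hy
  · exact real_inner_le_norm z (x - y)

lemma norm_noisyProjGradStep_sub_sq_le (hp : IsNearestPointMap p C) (hconv : ConvexOn ℝ C f)
    (hf : LipschitzOnWith M f C) (hd : DifferentiableAt ℝ f x) (hx : x ∈ C) (hy : y ∈ C)
    (hη : 0 ≤ η) (hw : 0 ≤ w) (hσ : 0 ≤ σ) (z : E) :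
    ‖noisyProjGradStep p f η w σ x z - y‖ ^ 2 ≤
      ‖x - y‖ ^ 2 - 2 * η * w * (f x - f y) - 2 * η * σ * inner ℝ (x - y) z +
        2 * η ^ 2 * (w ^ 2 * M ^ 2 + σ ^ 2 * ‖z‖ ^ 2) := by
  set x' := noisyProjGradStep p f η w σ x z
  have hstep := hp.norm_sub_sq_le hconv.1 x (η • (w • gradient f x + σ • z)) hy
  rw [real_inner_smul_left, real_inner_smul_left] at hstep
  change ‖x' - y‖ ^ 2 ≤ _ + (2 * (η * inner ℝ _ (x - x')) - ‖x - x'‖ ^ 2) at hstep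
  have hdescent : η * (w * (f x - f y) + σ * inner ℝ (x - y) z) ≤
      η * inner ℝ (w • gradient f x + σ • z) (x - y) := by
    rw [inner_add_left, real_inner_smul_left, real_inner_smul_left, real_inner_comm z]
    gcongr
    exact sub_le_inner_gradient hconv hd hx hy
  -- Both `x` and `x'` lie in `C`, so the Lipschitz bound on `C` controls `∇f` along `x - x'`.
  have hdrift : η * inner ℝ (w • gradient f x + σ • z) (x - x') ≤
      η * ((w * M + σ * ‖z‖) * ‖x - x'‖) := by
    gcongr
    exact inner_weighted_gradient_add_noise_le hconv.1 hf hd hx (hp _).1 hw hσ z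
  nlinarith [sq_nonneg (η * (w * M + σ * ‖z‖) - ‖x - x'‖), sq_nonneg (η * (w * M - σ * ‖z‖))]

lemma norm_sub_noisyProjGradStep_le (hp : IsNearestPointMap p C) (hC : Convex ℝ C)
    (hf : LipschitzOnWith M f C) (hd : DifferentiableAt ℝ f x) (hx : x ∈ C)
    (hη : 0 ≤ η) (hw : 0 ≤ w) (hσ : 0 ≤ σ) (z : E) :
    ‖x - noisyProjGradStep p f η w σ x z‖ ≤ η * (w * M + σ * ‖z‖) := by
  set x' := noisyProjGradStep p f η w σ x z
  have hsq : ‖x - x'‖ ^ 2 ≤ η * inner ℝ (w • gradient f x + σ • z) (x - x') := by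
    rw [← real_inner_smul_left]
    exact hp.norm_sub_sq_le_inner hC hx _
  have hdrift : η * inner ℝ (w • gradient f x + σ • z) (x - x') ≤
      η * ((w * M + σ * ‖z‖) * ‖x - x'‖) := by
    gcongr
    exact inner_weighted_gradient_add_noise_le hC hf hd hx (hp _).1 hw hσ z
  rcases (norm_nonneg (x - x')).eq_or_lt with h | h
  · rw [← h]; positivity
  · nlinarith

lemma apply_noisyProjGradStep_sub_le (hp : IsNearestPointMap p C) (hC : Convex ℝ C)
    (hf : LipschitzOnWith M f C) (hd : DifferentiableAt ℝ f x) (hx : x ∈ C)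
    (hη : 0 ≤ η) (hw : 0 ≤ w) (hσ : 0 ≤ σ) (z : E) :
    w * (f (noisyProjGradStep p f η w σ x z) - f x) ≤
      3 / 2 * η * (w ^ 2 * M ^ 2 + σ ^ 2 * ‖z‖ ^ 2) := by
  have hdist := hf.dist_le_mul x hx _ (hp (x - η • (w • gradient f x + σ • z))).1
  rw [Real.dist_eq, dist_eq_norm, abs_sub_comm] at hdist
  calc w * (f (noisyProjGradStep p f η w σ x z) - f x)
      ≤ w * (M * ‖x - noisyProjGradStep p f η w σ x z‖) := by
        gcongr
        exact (le_abs_self _).trans hdist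
    _ ≤ w * (M * (η * (w * M + σ * ‖z‖))) := by
        gcongr
        exact norm_sub_noisyProjGradStep_le hp hC hf hd hx hη hw hσ z
    _ ≤ 3 / 2 * η * (w ^ 2 * M ^ 2 + σ ^ 2 * ‖z‖ ^ 2) := by
        nlinarith [mul_nonneg hη (sq_nonneg (w * M - σ * ‖z‖)),
          mul_nonneg hη (sq_nonneg (σ * ‖z‖))]

end ProjectedStep

section ExpectedStep

open Bornology

lemma measurable_gradient {E : Type*} [NormedAddCommGroup E] [InnerProductSpace ℝ E]
    [CompleteSpace E] [MeasurableSpace E] [BorelSpace E] (f : E → ℝ) : Measurable (gradient f) :=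
  (InnerProductSpace.toDual ℝ E).symm.continuous.measurable.comp (measurable_fderiv ℝ f)

variable {E : Type*} [NormedAddCommGroup E] [MeasurableSpace E] [BorelSpace E] {Ω : Type*}
  {𝓖 mΩ : MeasurableSpace Ω} {μ : Measure Ω} {C : Set E} {f : E → ℝ} {M : NNReal} {X U Z : Ω → E}

lemma integrable_comp_of_lipschitzOnWith [IsFiniteMeasure μ] (hf : LipschitzOnWith M f C)
    (hC : IsBounded C) (hX : Measurable X) (hXC : ∀ ω, X ω ∈ C) :
    Integrable (fun ω => f (X ω)) μ := by
  obtain ⟨g, hg, hfg⟩ := hf.extend_real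
  obtain ⟨B, hB⟩ := (hg.isBounded_image hC).exists_norm_le
  simp only [funext fun ω => hfg (hXC ω)]
  exact .of_bound (hg.continuous.measurable.comp hX).aestronglyMeasurable B
    (.of_forall fun ω => hB _ ⟨X ω, hXC ω, rfl⟩)

variable [SecondCountableTopology E]

lemma integrable_norm_sub_sq [IsFiniteMeasure μ] (hC : IsBounded C) (hX : Measurable X)
    (hU : Measurable U) (hXC : ∀ ω, X ω ∈ C) (hUC : ∀ ω, U ω ∈ C) :
    Integrable (fun ω => ‖X ω - U ω‖ ^ 2) μ := by
  refine .of_bound (by fun_prop) (Metric.diam C ^ 2) (.of_forall fun ω => ?_)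
  rw [norm_pow, norm_norm, ← dist_eq_norm]
  gcongr
  exact Metric.dist_le_diam_of_mem hC (hXC ω) (hUC ω)

variable [InnerProductSpace ℝ E]

lemma integrable_inner_sub_of_isBounded (hC : IsBounded C) (hX : Measurable X) (hU : Measurable U)
    (hXC : ∀ ω, X ω ∈ C) (hUC : ∀ ω, U ω ∈ C) (hZ : Integrable Z μ) :
    Integrable (fun ω => inner ℝ (X ω - U ω) (Z ω)) μ := by
  refine (hZ.norm.const_mul (Metric.diam C)).mono'
    ((hX.sub hU).aestronglyMeasurable.inner hZ.aestronglyMeasurable) (.of_forall fun ω => ?_)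
  refine (norm_inner_le_norm _ _).trans ?_
  gcongr
  rw [← dist_eq_norm]
  exact Metric.dist_le_diam_of_mem hC (hXC ω) (hUC ω)

variable [CompleteSpace E]

lemma integral_inner_eq_zero_of_condExp_eq_zero [IsFiniteMeasure μ] (h𝓖 : 𝓖 ≤ mΩ)
    {Y : Ω → E} (hY : Measurable[𝓖] Y) (hZ : Integrable Z μ) (hZ0 : μ[Z | 𝓖] =ᵐ[μ] 0)
    (hYZ : Integrable (fun ω => inner ℝ (Y ω) (Z ω)) μ) :
    ∫ ω, inner ℝ (Y ω) (Z ω) ∂μ = 0 := by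
  have hpull := condExp_bilin_of_stronglyMeasurable_left (innerSL ℝ) hY.stronglyMeasurable hYZ hZ
  calc _ = ∫ ω, (μ[fun ω => innerSL ℝ (Y ω) (Z ω) | 𝓖]) ω ∂μ := (integral_condExp h𝓖).symm
    _ = ∫ _, (0 : ℝ) ∂μ := by
      refine integral_congr_ae ?_
      filter_upwards [hpull, hZ0] with ω hω hω0
      rw [hω, hω0, Pi.zero_apply, map_zero]
    _ = 0 := integral_zero _ _

variable {p : E → E} {η w σ : ℝ}

lemma measurable_noisyProjGradStep (hp : IsNearestPointMap p C) (hC : Convex ℝ C)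
    (hX : Measurable X) (hZ : Measurable Z) :
    Measurable fun ω => noisyProjGradStep p f η w σ (X ω) (Z ω) := by
  have hgrad := (measurable_gradient f).comp hX
  have hstep : Measurable fun ω => X ω - η • (w • gradient f (X ω) + σ • Z ω) := by fun_prop
  exact (hp.lipschitzWith_one hC).continuous.measurable.comp hstep

variable [IsProbabilityMeasure μ]

lemma integral_norm_noisyProjGradStep_sub_sq_le (hp : IsNearestPointMap p C)
    (hCb : IsBounded C) (hconv : ConvexOn ℝ C f) (hf : LipschitzOnWith M f C)
    (hd : ∀ x ∈ C, DifferentiableAt ℝ f x) (hη : 0 ≤ η) (hw : 0 ≤ w) (hσ : 0 ≤ σ)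
    (h𝓖 : 𝓖 ≤ mΩ) (hX : Measurable[𝓖] X) (hU : Measurable[𝓖] U)
    (hXC : ∀ ω, X ω ∈ C) (hUC : ∀ ω, U ω ∈ C)
    (hZm : Measurable Z) (hZ : MemLp Z 2 μ) (hZ0 : μ[Z | 𝓖] =ᵐ[μ] 0) :
    ∫ ω, ‖noisyProjGradStep p f η w σ (X ω) (Z ω) - U ω‖ ^ 2 ∂μ ≤
      ∫ ω, ‖X ω - U ω‖ ^ 2 ∂μ - 2 * η * w * (∫ ω, f (X ω) ∂μ - ∫ ω, f (U ω) ∂μ) +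
        2 * η ^ 2 * (w ^ 2 * M ^ 2 + σ ^ 2 * ∫ ω, ‖Z ω‖ ^ 2 ∂μ) := by
  have hXm : Measurable X := hX.mono h𝓖 le_rfl
  have hUm : Measurable U := hU.mono h𝓖 le_rfl
  have hZi : Integrable Z μ := hZ.integrable (by norm_num)
  have hdist := integrable_norm_sub_sq (μ := μ) hCb hXm hUm hXC hUC
  have hfX := integrable_comp_of_lipschitzOnWith (μ := μ) hf hCb hXm hXC
  have hfU := integrable_comp_of_lipschitzOnWith (μ := μ) hf hCb hUm hUC
  have hinner := integrable_inner_sub_of_isBounded hCb hXm hUm hXC hUC hZi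
  have hinner0 : ∫ ω, inner ℝ (X ω - U ω) (Z ω) ∂μ = 0 :=
    integral_inner_eq_zero_of_condExp_eq_zero h𝓖 (hX.sub hU) hZi hZ0 hinner
  have hsq : Integrable (fun ω => ‖Z ω‖ ^ 2) μ := hZ.integrable_norm_pow (by norm_num)
  have hgap : Integrable (fun ω => 2 * η * w * (f (X ω) - f (U ω))) μ := (hfX.sub hfU).const_mul _
  have hmart := hinner.const_mul (2 * η * σ)
  have hdescent : Integrable
      (fun ω => ‖X ω - U ω‖ ^ 2 - 2 * η * w * (f (X ω) - f (U ω))) μ := hdist.sub hgap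
  have hnoise := (integrable_const (w ^ 2 * (M : ℝ) ^ 2)).fun_add (hsq.const_mul (σ ^ 2))
  calc _ ≤ ∫ ω, (‖X ω - U ω‖ ^ 2 - 2 * η * w * (f (X ω) - f (U ω)) -
          2 * η * σ * inner ℝ (X ω - U ω) (Z ω) +
          2 * η ^ 2 * (w ^ 2 * M ^ 2 + σ ^ 2 * ‖Z ω‖ ^ 2)) ∂μ := by
        refine integral_mono ?_ ((hdescent.sub hmart).add (hnoise.const_mul _)) fun ω =>
          norm_noisyProjGradStep_sub_sq_le hp hconv hf (hd _ (hXC ω)) (hXC ω) (hUC ω) hη hw hσ (Z ω)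
        exact integrable_norm_sub_sq hCb (measurable_noisyProjGradStep hp hconv.1 hXm hZm) hUm
          (fun ω => (hp _).1) hUC
    _ = _ := by
        rw [integral_add ?_ (hnoise.const_mul _),
          integral_sub hdescent hmart, integral_sub hdist hgap,
          integral_const_mul, integral_const_mul, integral_const_mul, integral_sub hfX hfU,
          integral_add (integrable_const _) (hsq.const_mul _), integral_const_mul (σ ^ 2),
          hinner0]
        · simp
        · exact hdescent.sub hmart

lemma integral_comp_noisyProjGradStep_sub_le (hp : IsNearestPointMap p C)
    (hCb : IsBounded C) (hC : Convex ℝ C) (hf : LipschitzOnWith M f C)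
    (hd : ∀ x ∈ C, DifferentiableAt ℝ f x) (hη : 0 ≤ η) (hw : 0 ≤ w) (hσ : 0 ≤ σ)
    (hX : Measurable X) (hXC : ∀ ω, X ω ∈ C) (hZm : Measurable Z) (hZ : MemLp Z 2 μ) :
    w * (∫ ω, f (noisyProjGradStep p f η w σ (X ω) (Z ω)) ∂μ - ∫ ω, f (X ω) ∂μ) ≤
      3 / 2 * η * (w ^ 2 * M ^ 2 + σ ^ 2 * ∫ ω, ‖Z ω‖ ^ 2 ∂μ) := by
  have hfX := integrable_comp_of_lipschitzOnWith (μ := μ) hf hCb hX hXC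
  have hfX' := integrable_comp_of_lipschitzOnWith (μ := μ) hf hCb
    (measurable_noisyProjGradStep (f := f) (η := η) (w := w) (σ := σ) hp hC hX hZm)
    (fun ω => (hp _).1)
  have hsq : Integrable (fun ω => σ ^ 2 * ‖Z ω‖ ^ 2) μ :=
    (hZ.integrable_norm_pow (by norm_num)).const_mul _
  have hpath := integral_mono ((hfX'.sub hfX).const_mul w)
    (((integrable_const (w ^ 2 * (M : ℝ) ^ 2)).add hsq).const_mul (3 / 2 * η)) fun ω =>
    apply_noisyProjGradStep_sub_le hp hC hf (hd _ (hXC ω)) (hXC ω) hη hw hσ (Z ω)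
  simp only [Pi.sub_apply, Pi.add_apply] at hpath
  rw [integral_const_mul, integral_const_mul, integral_sub hfX' hfX,
    integral_add (integrable_const _) hsq, integral_const_mul (σ ^ 2)] at hpath
  simpa only [integral_const, probReal_univ, one_smul] using hpath

end ExpectedStep

section NoisyDescent

open Bornology

variable {E : Type*} [NormedAddCommGroup E] [InnerProductSpace ℝ E] [CompleteSpace E]

/-- `ξ` is square-integrable martingale-difference noise for the filtration `𝓕`, with second moments
at most `v`. The increment `ξ t` is revealed at time `t + 1`. -/
structure IsMartingaleNoise [MeasurableSpace E] {Ω : Type*} {mΩ : MeasurableSpace Ω}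
    (𝓕 : Filtration ℕ mΩ) {T : ℕ} (ξ : Fin T → Ω → E) (v : ℝ) (μ : Measure Ω) : Prop where
  measurable : ∀ t : Fin T, Measurable[𝓕 (t + 1)] (ξ t)
  memLp : ∀ t, MemLp (ξ t) 2 μ
  condExp_eq_zero : ∀ t : Fin T, μ[ξ t | 𝓕 t] =ᵐ[μ] 0
  integral_norm_sq_le : ∀ t, ∫ ω, ‖ξ t ω‖ ^ 2 ∂μ ≤ v

/-- `θ 0, …, θ T` is the random trajectory of `T` steps of noisy projected gradient descent on `f`
started at a deterministic point of `C`, with noise `ξ` and step size `η t` in the step from `θ t`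
to `θ (t + 1)`. Nothing is required of `θ t` for `t > T`. -/
structure IsNoisyPGD {Ω : Type*} (C : Set E) (p : E → E) (f : E → ℝ) (η : ℕ → ℝ) (w σ : ℝ) {T : ℕ}
    (ξ : Fin T → Ω → E) (θ : ℕ → Ω → E) : Prop where
  init : ∃ x₀ ∈ C, θ 0 = fun _ => x₀
  step : ∀ t (ht : t < T),
    θ (t + 1) = fun ω => noisyProjGradStep p f (η t) w σ (θ t ω) (ξ ⟨t, ht⟩ ω)

namespace IsNoisyPGD

variable {Ω : Type*} {C : Set E} {p : E → E} {f : E → ℝ} {η : ℕ → ℝ} {w σ : ℝ} {T : ℕ}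
  {ξ : Fin T → Ω → E} {θ : ℕ → Ω → E}

lemma mem (hθ : IsNoisyPGD C p f η w σ ξ θ) (hp : IsNearestPointMap p C) {t : ℕ} (ht : t ≤ T)
    (ω : Ω) : θ t ω ∈ C := by
  cases t with
  | zero =>
    obtain ⟨x₀, hx₀, h⟩ := hθ.init
    simpa only [h] using hx₀
  | succ t =>
    rw [hθ.step t ht]
    exact (hp _).1

variable [MeasurableSpace E] [BorelSpace E] [SecondCountableTopology E] {mΩ : MeasurableSpace Ω}
  {𝓕 : Filtration ℕ mΩ} {v : ℝ} {μ : Measure Ω}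

lemma measurable (hθ : IsNoisyPGD C p f η w σ ξ θ) (hξ : IsMartingaleNoise 𝓕 ξ v μ)
    (hp : IsNearestPointMap p C) (hC : Convex ℝ C) {t : ℕ} (ht : t ≤ T) :
    Measurable[𝓕 t] (θ t) := by
  induction t with
  | zero =>
    obtain ⟨x₀, -, h⟩ := hθ.init
    rw [h]
    exact measurable_const
  | succ t ih =>
    rw [hθ.step t ht]
    exact @measurable_noisyProjGradStep _ _ _ _ _ (𝓕 (t + 1)) _ _ _ _ _ _ _ _ _ _ _ hp hC
      ((ih (by lia)).mono (𝓕.mono t.le_succ) le_rfl) (hξ.measurable ⟨t, ht⟩)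

variable [IsProbabilityMeasure μ] {M : NNReal} {D G : ℝ} {U : Ω → E}

lemma integral_norm_succ_sub_sq_le (hθ : IsNoisyPGD C p f η w σ ξ θ)
    (hξ : IsMartingaleNoise 𝓕 ξ v μ) (hp : IsNearestPointMap p C) (hCb : IsBounded C)
    (hconv : ConvexOn ℝ C f) (hf : LipschitzOnWith M f C) (hd : ∀ x ∈ C, DifferentiableAt ℝ f x)
    (hw : 0 ≤ w) (hσ : 0 ≤ σ) {t : ℕ} (ht : t < T) (hη : 0 ≤ η t) (hU : Measurable[𝓕 t] U)
    (hUC : ∀ ω, U ω ∈ C) :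
    ∫ ω, ‖θ (t + 1) ω - U ω‖ ^ 2 ∂μ ≤
      ∫ ω, ‖θ t ω - U ω‖ ^ 2 ∂μ - 2 * η t * w * (∫ ω, f (θ t ω) ∂μ - ∫ ω, f (U ω) ∂μ) +
        2 * η t ^ 2 * (w ^ 2 * M ^ 2 + σ ^ 2 * v) := by
  rw [hθ.step t ht]
  refine (integral_norm_noisyProjGradStep_sub_sq_le hp hCb hconv hf hd hη hw hσ (𝓕.le t)
    (hθ.measurable hξ hp hconv.1 ht.le) hU (hθ.mem hp ht.le) hUC
    ((hξ.measurable ⟨t, ht⟩).mono (𝓕.le _) le_rfl) (hξ.memLp _)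
    (hξ.condExp_eq_zero ⟨t, ht⟩)).trans ?_
  gcongr
  exact hξ.integral_norm_sq_le _

lemma integral_succ_sub_integral_le (hθ : IsNoisyPGD C p f η w σ ξ θ)
    (hξ : IsMartingaleNoise 𝓕 ξ v μ) (hp : IsNearestPointMap p C) (hCb : IsBounded C)
    (hC : Convex ℝ C) (hf : LipschitzOnWith M f C) (hd : ∀ x ∈ C, DifferentiableAt ℝ f x)
    (hw : 0 ≤ w) (hσ : 0 ≤ σ) {t : ℕ} (ht : t < T) (hη : 0 ≤ η t) :
    w * (∫ ω, f (θ (t + 1) ω) ∂μ - ∫ ω, f (θ t ω) ∂μ) ≤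
      3 / 2 * η t * (w ^ 2 * M ^ 2 + σ ^ 2 * v) := by
  rw [hθ.step t ht]
  refine (integral_comp_noisyProjGradStep_sub_le hp hCb hC hf hd hη hw hσ
    ((hθ.measurable hξ hp hC ht.le).mono (𝓕.le _) le_rfl) (hθ.mem hp ht.le)
    ((hξ.measurable _).mono (𝓕.le _) le_rfl) (hξ.memLp _)).trans ?_
  gcongr
  exact hξ.integral_norm_sq_le _

lemma gap_le_telescoping
    (hθ : IsNoisyPGD C p f (fun t => D / (G * √(t + 1))) w σ ξ θ)
    (hξ : IsMartingaleNoise 𝓕 ξ v μ) (hp : IsNearestPointMap p C) (hCb : IsBounded C)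
    (hconv : ConvexOn ℝ C f) (hf : LipschitzOnWith M f C) (hd : ∀ x ∈ C, DifferentiableAt ℝ f x)
    (hw : 0 ≤ w) (hσ : 0 ≤ σ) (hD : 0 < D) (hG : 0 < G) (hGv : w ^ 2 * M ^ 2 + σ ^ 2 * v ≤ G ^ 2)
    {t : ℕ} (ht : t < T) (hU : Measurable[𝓕 t] U) (hUC : ∀ ω, U ω ∈ C) :
    w * (∫ ω, f (θ t ω) ∂μ - ∫ ω, f (U ω) ∂μ) / (D * G) ≤
      √(t + 1) / 2 * ((∫ ω, ‖θ t ω - U ω‖ ^ 2 ∂μ) / D ^ 2 -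
        (∫ ω, ‖θ (t + 1) ω - U ω‖ ^ 2 ∂μ) / D ^ 2) + 1 / √(t + 1) := by
  have hstep := hθ.integral_norm_succ_sub_sq_le hξ hp hCb hconv hf hd hw hσ ht (by positivity)
    hU hUC
  set δ := ∫ ω, f (θ t ω) ∂μ - ∫ ω, f (U ω) ∂μ
  set I := ∫ ω, ‖θ t ω - U ω‖ ^ 2 ∂μ
  set I' := ∫ ω, ‖θ (t + 1) ω - U ω‖ ^ 2 ∂μ
  have hq : 0 < √(t + 1 : ℝ) := by positivity
  set q := √(t + 1 : ℝ)
  have hnoise : 2 * (D / (G * q)) ^ 2 * (w ^ 2 * M ^ 2 + σ ^ 2 * v) ≤ 2 * D ^ 2 / q ^ 2 :=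
    calc _ ≤ 2 * (D / (G * q)) ^ 2 * G ^ 2 := by gcongr
      _ = _ := by field_simp
  calc w * δ / (D * G) = q / (2 * D ^ 2) * (2 * (D / (G * q)) * w * δ) := by field_simp
    _ ≤ q / (2 * D ^ 2) * (I - I' + 2 * D ^ 2 / q ^ 2) := by gcongr; linarith
    _ = _ := by field_simp

lemma sum_gap_le (hθ : IsNoisyPGD C p f (fun t => D / (G * √(t + 1))) w σ ξ θ)
    (hξ : IsMartingaleNoise 𝓕 ξ v μ) (hp : IsNearestPointMap p C) (hCb : IsBounded C)
    (hconv : ConvexOn ℝ C f) (hf : LipschitzOnWith M f C) (hd : ∀ x ∈ C, DifferentiableAt ℝ f x)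
    (hw : 0 ≤ w) (hσ : 0 ≤ σ) (hD : 0 < D) (hDC : Metric.diam C ≤ D) (hG : 0 < G)
    (hGv : w ^ 2 * M ^ 2 + σ ^ 2 * v ≤ G ^ 2) {s : ℕ} (hs : s ≤ T) (hU : Measurable[𝓕 s] U)
    (hUC : ∀ ω, U ω ∈ C) (hsU : √s * ((∫ ω, ‖θ s ω - U ω‖ ^ 2 ∂μ) / D ^ 2) = 0) :
    ∑ t ∈ Finset.Ico s T, w * (∫ ω, f (θ t ω) ∂μ - ∫ ω, f (U ω) ∂μ) / (D * G) ≤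
      5 / 2 / √T * (T - s) := by
  refine sum_Ico_le_div_sqrt (e := fun t => (∫ ω, ‖θ t ω - U ω‖ ^ 2 ∂μ) / D ^ 2)
    (fun t ht => ⟨by positivity, ?_⟩) hsU (fun t ht => ?_) hs
  · rw [div_le_one (by positivity)]
    calc _ ≤ ∫ _, D ^ 2 ∂μ := by
          refine integral_mono_of_nonneg (.of_forall fun ω => by positivity)
            (integrable_const _) (.of_forall fun ω => ?_)
          dsimp only
          gcongr
          rw [← dist_eq_norm]
          exact (Metric.dist_le_diam_of_mem hCb (hθ.mem hp (Finset.mem_Icc.1 ht).2 ω)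
            (hUC ω)).trans hDC
      _ = D ^ 2 := by simp
  · obtain ⟨hst, htT⟩ := Finset.mem_Ico.1 ht
    exact hθ.gap_le_telescoping hξ hp hCb hconv hf hd hw hσ hD hG hGv htT
      (hU.mono (𝓕.mono hst) le_rfl) hUC

lemma weighted_gap_pred_le {n : ℕ} {ξ : Fin (n + 1) → Ω → E}
    (hθ : IsNoisyPGD C p f (fun t => D / (G * √(t + 1))) w σ ξ θ)
    (hξ : IsMartingaleNoise 𝓕 ξ v μ) (hp : IsNearestPointMap p C) (hCb : IsBounded C)
    (hconv : ConvexOn ℝ C f) (hf : LipschitzOnWith M f C) (hd : ∀ x ∈ C, DifferentiableAt ℝ f x)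
    (hw : 0 ≤ w) (hσ : 0 ≤ σ) (hD : 0 < D) (hDC : Metric.diam C ≤ D) (hG : 0 < G)
    (hGv : w ^ 2 * M ^ 2 + σ ^ 2 * v ≤ G ^ 2) {u : E} (hu : u ∈ C) :
    w * (∫ ω, f (θ n ω) ∂μ - f u) ≤ 5 / 2 * D * G * (2 + Real.log (n + 1)) / √(n + 1) := by
  set a : ℕ → ℝ := fun t => w * (∫ ω, f (θ t ω) ∂μ - f u) / (D * G)
  have hsuffix : ∀ s ≤ n, ∑ t ∈ Finset.Ico s (n + 1), (a t - a s) ≤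
      5 / 2 / √(n + 1 : ℕ) * ((n + 1 : ℕ) - s) := by
    intro s hs
    convert hθ.sum_gap_le hξ hp hCb hconv hf hd hw hσ hD hDC hG hGv (by lia : s ≤ n + 1)
      (hθ.measurable hξ hp hconv.1 (by lia)) (hθ.mem hp (by lia)) (by simp) using 2 with t
    ring
  have htotal : ∑ t ∈ Finset.range (n + 1), a t ≤ 5 / 2 / √(n + 1 : ℕ) * (n + 1) := by
    simpa [a] using hθ.sum_gap_le hξ hp hCb hconv hf hd hw hσ hD hDC hG hGv (Nat.zero_le _)
      (measurable_const (a := u)) (fun _ => hu) (by simp)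
  have hlast := last_le_of_suffix_sums_le (by positivity) hsuffix htotal
  rw [div_le_iff₀ (mul_pos hD hG)] at hlast
  push_cast at hlast
  exact hlast.trans_eq (by ring)

theorem weighted_gap_last_le (hθ : IsNoisyPGD C p f (fun t => D / (G * √(t + 1))) w σ ξ θ)
    (hξ : IsMartingaleNoise 𝓕 ξ v μ) (hp : IsNearestPointMap p C) (hCb : IsBounded C)
    (hconv : ConvexOn ℝ C f) (hf : LipschitzOnWith M f C) (hd : ∀ x ∈ C, DifferentiableAt ℝ f x)
    (hw : 0 ≤ w) (hσ : 0 ≤ σ) (hD : 0 < D) (hDC : Metric.diam C ≤ D) (hG : 0 < G)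
    (hGv : w ^ 2 * M ^ 2 + σ ^ 2 * v ≤ G ^ 2) (hT : 0 < T) {u : E} (hu : u ∈ C) :
    w * (∫ ω, f (θ T ω) ∂μ - f u) ≤ 13 / 2 * D * G * (1 + Real.log T) / √T := by
  obtain ⟨n, rfl⟩ := Nat.exists_eq_add_one.2 hT
  have hpred := hθ.weighted_gap_pred_le hξ hp hCb hconv hf hd hw hσ hD hDC hG hGv hu
  have hstep : w * (∫ ω, f (θ (n + 1) ω) ∂μ - ∫ ω, f (θ n ω) ∂μ) ≤
      3 / 2 * (D / (G * √(n + 1))) * G ^ 2 := by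
    refine (hθ.integral_succ_sub_integral_le hξ hp hCb hconv.1 hf hd hw hσ n.lt_succ_self
      (by positivity)).trans ?_
    gcongr
  have hlog : 0 ≤ Real.log (n + 1 : ℕ) := Real.log_natCast_nonneg _
  push_cast at hlog ⊢
  calc _ = w * (∫ ω, f (θ n ω) ∂μ - f u) +
        w * (∫ ω, f (θ (n + 1) ω) ∂μ - ∫ ω, f (θ n ω) ∂μ) := by ring
    _ ≤ 5 / 2 * D * G * (2 + Real.log (n + 1)) / √(n + 1) +
        3 / 2 * (D / (G * √(n + 1))) * G ^ 2 := add_le_add hpred hstep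
    _ = D * G * (13 / 2 + 5 / 2 * Real.log (n + 1)) / √(n + 1) := by field_simp; ring
    _ ≤ D * G * (13 / 2 + 13 / 2 * Real.log (n + 1)) / √(n + 1) := by gcongr; norm_num
    _ = _ := by ring

theorem gap_last_le {k Γ d : ℝ} (hθ : IsNoisyPGD C p f
      (fun t => D / (Γ * √(w ^ 2 * k ^ 2 + T * d / 2) * √(t + 1))) w (Γ * √(T / 2)) ξ θ)
    (hξ : IsMartingaleNoise 𝓕 ξ d μ) (hp : IsNearestPointMap p C) (hCb : IsBounded C)
    (hconv : ConvexOn ℝ C f) (hf : LipschitzOnWith (k * Γ).toNNReal f C)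
    (hdiff : ∀ x ∈ C, DifferentiableAt ℝ f x) (hw : 0 < w) (hk : 0 < k) (hΓ : 0 < Γ) (hd : 0 ≤ d)
    (hD : 0 < D) (hDC : Metric.diam C ≤ D) (hT : 0 < T) {u : E} (hu : u ∈ C) :
    ∫ ω, f (θ T ω) ∂μ - f u ≤ 13 / 2 * D * Γ * (1 + Real.log T) *
      (√(w ^ 2 * k ^ 2 + T * d / 2) / (w * √T)) := by
  have hG : w ^ 2 * (k * Γ).toNNReal ^ 2 + (Γ * √(T / 2)) ^ 2 * d ≤
      (Γ * √(w ^ 2 * k ^ 2 + T * d / 2)) ^ 2 := by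
    rw [Real.coe_toNNReal _ (mul_pos hk hΓ).le, mul_pow, mul_pow, mul_pow,
      Real.sq_sqrt (by positivity), Real.sq_sqrt (by positivity)]
    exact le_of_eq (by ring)
  have hlast := hθ.weighted_gap_last_le hξ hp hCb hconv hf hdiff hw.le
    (by positivity) hD hDC (by positivity) hG hT hu
  rw [← le_div_iff₀' hw] at hlast
  exact hlast.trans_eq (by field_simp)

end IsNoisyPGD

end NoisyDescent

section IndependentNoise

variable {Ω : Type*} {mΩ : MeasurableSpace Ω} {μ : Measure Ω} {T : ℕ}

lemma iIndepFun_curry {ι κ 𝓧 : Type*} [MeasurableSpace 𝓧] {X : ι → κ → Ω → 𝓧}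
    (hX : ∀ i k, Measurable (X i k)) (hind : iIndepFun (fun (p : ι × κ) ω => X p.1 p.2 ω) μ) :
    iIndepFun (fun i ω k => X i k ω) μ := by
  have := hind.isProbabilityMeasure
  have : ∀ i k, IsProbabilityMeasure (μ.map (X i k)) :=
    fun i k => Measure.isProbabilityMeasure_map (hX i k).aemeasurable
  have hrow : ∀ i, μ.map (fun ω k => X i k ω) = Measure.infinitePi fun k => μ.map (X i k) :=
    fun i => (hind.precomp (Prod.mk_right_injective i)).map_fun_eq_infinitePi_map (hX i)
  have hjoint := hind.map_fun_eq_infinitePi_map fun p : ι × κ => hX p.1 p.2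
  rw [iIndepFun_iff_map_fun_eq_infinitePi_map (by fun_prop)]
  simp only [hrow]
  rw [← Measure.infinitePi_map_curry, ← hjoint, Measure.map_map (by fun_prop) (by fun_prop)]
  rfl

/-- The filtration whose `σ`-algebra at time `t` is generated by the vectors `ξ s` with `s < t`,
which are the noise entering the first `t` steps of the algorithm. -/
def pastFiltration {E : Type*} [MeasurableSpace E] (ξ : Fin T → Ω → E)
    (hξ : ∀ t, Measurable (ξ t)) : Filtration ℕ mΩ where
  seq t := ⨆ s ∈ {s : Fin T | (s : ℕ) < t}, MeasurableSpace.comap (ξ s) inferInstance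
  mono' _ _ hst := biSup_mono fun _ hs => lt_of_lt_of_le hs hst
  le' _ := iSup₂_le fun s _ => (hξ s).comap_le

lemma measurable_pastFiltration {E : Type*} [MeasurableSpace E] {ξ : Fin T → Ω → E}
    (hξ : ∀ t, Measurable (ξ t)) (t : Fin T) : Measurable[pastFiltration ξ hξ (t + 1)] (ξ t) :=
  measurable_iff_comap_le.2 <|
    le_iSup₂_of_le (f := fun (s : Fin T) (_ : s ∈ {s : Fin T | (s : ℕ) < t + 1}) =>
      MeasurableSpace.comap (ξ s) inferInstance) t t.1.lt_succ_self le_rfl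

lemma isMartingaleNoise_pastFiltration {E : Type*} [NormedAddCommGroup E]
    [InnerProductSpace ℝ E] [CompleteSpace E] [SecondCountableTopology E] [MeasurableSpace E]
    [BorelSpace E] {ξ : Fin T → Ω → E} {v : ℝ} (hξ : ∀ t, Measurable (ξ t))
    (hind : iIndepFun ξ μ) (hLp : ∀ t, MemLp (ξ t) 2 μ) (hmean : ∀ t, ∫ ω, ξ t ω ∂μ = 0)
    (hv : ∀ t, ∫ ω, ‖ξ t ω‖ ^ 2 ∂μ ≤ v) :
    IsMartingaleNoise (pastFiltration ξ hξ) ξ v μ where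
  measurable := measurable_pastFiltration hξ
  memLp := hLp
  condExp_eq_zero t := by
    have := hind.isProbabilityMeasure
    have hpast : Indep (MeasurableSpace.comap (ξ t) inferInstance) (pastFiltration ξ hξ t) μ := by
      have := indep_iSup_of_disjoint (fun s => (hξ s).comap_le) hind.iIndep
        (S := {t}) (T := {s : Fin T | (s : ℕ) < t}) (by simp)
      rwa [iSup_singleton] at this
    refine (condExp_indep_eq (hξ t).comap_le (Filtration.le _ _)
      (comap_measurable (ξ t)).stronglyMeasurable hpast).trans (.of_eq ?_)
    simp only [hmean]
    rfl
  integral_norm_sq_le := hv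

lemma iIndepFun_of_iIndepFun_coord {ι κ : Type*} {X : ι → Ω → EuclideanSpace ℝ κ}
    (hX : ∀ i, Measurable (X i)) (hind : iIndepFun (fun (p : ι × κ) ω => X p.1 ω p.2) μ) :
    iIndepFun X μ :=
  (iIndepFun_curry (X := fun i k ω => X i ω k) (fun i k => by fun_prop) hind).comp
    (fun _ => WithLp.toLp 2) fun _ => WithLp.measurable_toLp 2 _

variable {κ : Type*} [Fintype κ] {X : Ω → EuclideanSpace ℝ κ}

lemma memLp_of_hasLaw_eval_gaussianReal
    (hX : ∀ k, HasLaw (fun ω => X ω k) (gaussianReal 0 1) μ) (q : NNReal) : MemLp X q μ :=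
  .of_eval_piLp fun k => (memLp_map_measure_iff (g := id) (by fun_prop) (hX k).aemeasurable).1
    ((hX k).map_eq ▸ memLp_id_gaussianReal q)

lemma integral_eq_zero_of_hasLaw_eval_gaussianReal
    (hX : ∀ k, HasLaw (fun ω => X ω k) (gaussianReal 0 1) μ) : ∫ ω, X ω ∂μ = 0 := by
  have hint : Integrable X μ := memLp_one_iff_integrable.1 (memLp_of_hasLaw_eval_gaussianReal hX 1)
  ext k
  rw [eval_integral_piLp hint.eval_piLp, (hX k).integral_eq, integral_id_gaussianReal]
  rfl

lemma integral_norm_sq_of_hasLaw_eval_gaussianReal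
    (hX : ∀ k, HasLaw (fun ω => X ω k) (gaussianReal 0 1) μ) :
    ∫ ω, ‖X ω‖ ^ 2 ∂μ = Fintype.card κ := by
  have hcoord : ∀ k, ∫ ω, X ω k ^ 2 ∂μ = 1 := fun k => by
    have hmean := (hX k).integral_eq.trans integral_id_gaussianReal
    have hvar := (hX k).variance_eq.trans variance_id_gaussianReal
    rwa [variance_of_integral_eq_zero (hX k).aemeasurable hmean] at hvar
  have hLp := memLp_of_hasLaw_eval_gaussianReal hX 2
  simp only [EuclideanSpace.real_norm_sq_eq]
  rw [integral_finsetSum _ fun k _ => (hLp.eval_piLp k).integrable_sq]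
  simp [hcoord]

theorem isMartingaleNoise_of_iIndepFun_gaussianReal {ι : Type*}
    {ξ : ι → Fin T → Ω → EuclideanSpace ℝ κ} (hξ : ∀ i t, Measurable (ξ i t))
    (hind : iIndepFun (fun (p : (ι × Fin T) × κ) ω => ξ p.1.1 p.1.2 ω p.2) μ)
    (hlaw : ∀ i t k, μ.map (fun ω => ξ i t ω k) = gaussianReal 0 1) (i : ι) :
    IsMartingaleNoise (pastFiltration (ξ i) (hξ i)) (ξ i) (Fintype.card κ) μ := by
  have hcoord : ∀ t k, HasLaw (fun ω => ξ i t ω k) (gaussianReal 0 1) μ := fun t k =>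
    ⟨by have := hξ i t; fun_prop, hlaw i t k⟩
  have hvec : iIndepFun (fun p : ι × Fin T => ξ p.1 p.2) μ :=
    iIndepFun_of_iIndepFun_coord (fun p => hξ p.1 p.2) hind
  have hrow : iIndepFun (ξ i) μ := hvec.precomp (g := Prod.mk i) (Prod.mk_right_injective i)
  exact isMartingaleNoise_pastFiltration (hξ i) hrow
    (fun t => memLp_of_hasLaw_eval_gaussianReal (hcoord t) 2)
    (fun t => integral_eq_zero_of_hasLaw_eval_gaussianReal (hcoord t))
    (fun t => (integral_norm_sq_of_hasLaw_eval_gaussianReal (hcoord t)).le)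

end IndependentNoise

section AdaptiveWeights

variable {ι : Type*} [Fintype ι]

lemma sum_le_sqrt_card_mul_sum_sq (x : ι → ℝ) : ∑ i, x i ≤ √(Fintype.card ι * ∑ i, x i ^ 2) :=
  Real.le_sqrt_of_sq_le sq_sum_le_card_mul_sum_sq

lemma sum_sqrt_div_mul_sqrt_le {w n : ι → ℝ} {d T : ℝ} (hw : ∀ i, 0 < w i) (hT : 0 < T)
    (hd : 0 ≤ d) (hTw : 2 * ∑ i, n i ^ 2 ≤ T * d * ∑ i, 1 / w i ^ 2) :
    ∑ i, √(w i ^ 2 * n i ^ 2 + T * d / 2) / (w i * √T) ≤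
      √(Fintype.card ι * (d * ∑ i, 1 / w i ^ 2)) := by
  refine (sum_le_sqrt_card_mul_sum_sq _).trans ?_
  gcongr
  calc ∑ i, (√(w i ^ 2 * n i ^ 2 + T * d / 2) / (w i * √T)) ^ 2
      = ∑ i, (n i ^ 2 / T + d / 2 * (1 / w i ^ 2)) := by
        refine Finset.sum_congr rfl fun i _ => ?_
        have := hw i
        rw [div_pow, mul_pow, Real.sq_sqrt (by positivity), Real.sq_sqrt hT.le]
        field_simp
    _ = (∑ i, n i ^ 2) / T + d / 2 * ∑ i, 1 / w i ^ 2 := by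
        rw [Finset.sum_add_distrib, Finset.sum_div, Finset.mul_sum]
    _ ≤ d / 2 * ∑ i, 1 / w i ^ 2 + d / 2 * ∑ i, 1 / w i ^ 2 := by
        gcongr
        rw [div_le_iff₀ hT]
        linarith
    _ = d * ∑ i, 1 / w i ^ 2 := by ring

lemma two_mul_le_ceil_mul {d W : ℝ} (hd : 0 < d) (hW : 0 < W) (S : ℝ) :
    2 * S ≤ ⌈2 / d * S / W⌉₊ * d * W :=
  calc 2 * S = 2 / d * S / W * d * W := by field_simp
    _ ≤ _ := by gcongr; exact Nat.le_ceil _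

/-- The weights of the paper's eq. (8) with `γ = 0`, for tasks with `n i` examples; `B` stands for
the product `n β̄` of the paper. -/
noncomputable def adaptiveWeight (n : ι → ℝ) (B : ℝ) (i : ι) : ℝ :=
  n i ^ (-(1 / 4 : ℝ)) / √((∑ i', √(n i')) / B)

variable {n : ι → ℝ} {B : ℝ}

lemma adaptiveWeight_pos (hn : ∀ i, 0 < n i) (hB : 0 < B) (i : ι) : 0 < adaptiveWeight n B i := by
  have hsum : 0 < ∑ i, √(n i) :=
    Finset.sum_pos (fun i _ => Real.sqrt_pos.2 (hn i)) ⟨i, Finset.mem_univ i⟩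
  exact div_pos (Real.rpow_pos_of_pos (hn i) _) (by positivity)

lemma sum_one_div_adaptiveWeight_sq (hn : ∀ i, 0 ≤ n i) (hB : 0 ≤ B) :
    ∑ i, 1 / adaptiveWeight n B i ^ 2 = (∑ i, √(n i)) ^ 2 / B := by
  have hterm : ∀ i, 1 / adaptiveWeight n B i ^ 2 = √(n i) * ((∑ i, √(n i)) / B) := by
    intro i
    have hquarter : (n i ^ (-(1 / 4 : ℝ))) ^ 2 = (√(n i))⁻¹ := by
      rw [← Real.rpow_mul_natCast (hn i), Real.sqrt_eq_rpow, ← Real.rpow_neg (hn i)]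
      norm_num
    rw [adaptiveWeight, div_pow, hquarter, Real.sq_sqrt (by positivity), one_div_div,
      div_inv_eq_mul, mul_comm]
  rw [Finset.sum_congr rfl fun i _ => hterm i, ← Finset.sum_mul]
  ring

lemma sqrt_card_mul_sum_one_div_adaptiveWeight_sq (hn : ∀ i, 0 ≤ n i) (hB : 0 ≤ B) {d : ℝ}
    (hd : 0 ≤ d) : √(Fintype.card ι * (d * ∑ i, 1 / adaptiveWeight n B i ^ 2)) =
      √(Fintype.card ι * d / B) * ∑ i, √(n i) := by
  rw [sum_one_div_adaptiveWeight_sq hn hB, ← Real.sqrt_sq (show 0 ≤ ∑ i, √(n i) by positivity),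
    ← Real.sqrt_mul (by positivity), Real.sqrt_sq (by positivity)]
  ring_nf

end AdaptiveWeights

theorem stmt10_general {E Ω ι : Type*} [NormedAddCommGroup E] [InnerProductSpace ℝ E]
    [CompleteSpace E] [SecondCountableTopology E] [MeasurableSpace E] [BorelSpace E]
    {mΩ : MeasurableSpace Ω} {μ : Measure Ω} [IsProbabilityMeasure μ] [Fintype ι] [Nonempty ι]
    {n : ι → ℝ} (hn : ∀ i, 0 < n i) {B d Γ D : ℝ} (hB : 0 < B) (hd : 0 < d) (hΓ : 0 < Γ)
    (hD : 0 < D) {C : Set E} (hCb : Bornology.IsBounded C) (hDC : Metric.diam C ≤ D) {p : E → E}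
    (hp : IsNearestPointMap p C) {L : ι → E → ℝ} (hconv : ∀ i, ConvexOn ℝ C (L i))
    (hlip : ∀ i, LipschitzOnWith (n i * Γ).toNNReal (L i) C)
    (hdiff : ∀ i, ∀ x ∈ C, DifferentiableAt ℝ (L i) x) {u : ι → E} (hu : ∀ i, u i ∈ C)
    {w : ι → ℝ} (hw : w = adaptiveWeight n B) {T : ℕ}
    (hT : T = ⌈2 / d * (∑ i, n i ^ 2) / ∑ i, 1 / w i ^ 2⌉₊)
    {𝓕 : ι → Filtration ℕ mΩ} {ξ : ι → Fin T → Ω → E}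
    (hξ : ∀ i, IsMartingaleNoise (𝓕 i) (ξ i) d μ) {θ : ι → ℕ → Ω → E}
    (hθ : ∀ i, IsNoisyPGD C p (L i)
      (fun t => D / (Γ * √(w i ^ 2 * n i ^ 2 + T * d / 2) * √(t + 1)))
      (w i) (Γ * √(T / 2)) (ξ i) (θ i)) :
    ∑ i, ∫ ω, L i (θ i T ω) ∂μ - ∑ i, L i (u i) ≤
      13 / 2 * D * Γ * (1 + Real.log T) * √(Fintype.card ι * d / B) * ∑ i, √(n i) := by
  have hw_pos : ∀ i, 0 < w i := hw ▸ adaptiveWeight_pos hn hB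
  have hW_pos : 0 < ∑ i, 1 / w i ^ 2 :=
    Finset.sum_pos (fun i _ => by have := hw_pos i; positivity) Finset.univ_nonempty
  have hn_pos : 0 < ∑ i, n i ^ 2 :=
    Finset.sum_pos (fun i _ => pow_pos (hn i) 2) Finset.univ_nonempty
  have hT_pos : 0 < T := hT ▸ Nat.ceil_pos.2 (by positivity)
  have hTw : 2 * ∑ i, n i ^ 2 ≤ T * d * ∑ i, 1 / w i ^ 2 := hT ▸ two_mul_le_ceil_mul hd hW_pos _
  have htask : ∀ i, ∫ ω, L i (θ i T ω) ∂μ - L i (u i) ≤ 13 / 2 * D * Γ * (1 + Real.log T) *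
      (√(w i ^ 2 * n i ^ 2 + T * d / 2) / (w i * √T)) := fun i =>
    (hθ i).gap_last_le (hξ i) hp hCb (hconv i) (hlip i) (hdiff i) (hw_pos i) (hn i) hΓ hd.le hD hDC
      hT_pos (hu i)
  have : 0 ≤ Real.log T := Real.log_natCast_nonneg T
  rw [← Finset.sum_sub_distrib]
  calc _ ≤ 13 / 2 * D * Γ * (1 + Real.log T) *
        ∑ i, √(w i ^ 2 * n i ^ 2 + T * d / 2) / (w i * √T) := by
        rw [Finset.mul_sum]
        exact Finset.sum_le_sum fun i _ => htask i
    _ ≤ 13 / 2 * D * Γ * (1 + Real.log T) * √(Fintype.card ι * (d * ∑ i, 1 / w i ^ 2)) := by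
        gcongr
        exact sum_sqrt_div_mul_sqrt_le hw_pos (Nat.cast_pos.2 hT_pos) hd.le hTw
    _ = _ := by
        rw [hw, sqrt_card_mul_sum_one_div_adaptiveWeight_sq (fun i => (hn i).le) hB.le hd.le]
        ring

section SumOfLosses

variable {E : Type*} [SeminormedAddCommGroup E] {C : Set E} {ι : Type*} {ℓ : ι → E → ℝ}

lemma convexOn_finsetSum [NormedSpace ℝ E] (hC : Convex ℝ C) (s : Finset ι)
    (hℓ : ∀ j ∈ s, ConvexOn ℝ C (ℓ j)) :
    ConvexOn ℝ C fun x => ∑ j ∈ s, ℓ j x := by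
  induction s using Finset.cons_induction with
  | empty => simpa using convexOn_const 0 hC
  | cons j s hj ih =>
    simp only [Finset.sum_cons]
    rw [Finset.forall_mem_cons] at hℓ
    exact hℓ.1.add (ih hℓ.2)

lemma lipschitzOnWith_sum [Fintype ι] {Γ : ℝ}
    (hℓ : ∀ j, ∀ x ∈ C, ∀ y ∈ C, |ℓ j x - ℓ j y| ≤ Γ * ‖x - y‖) :
    LipschitzOnWith (Fintype.card ι * Γ).toNNReal (fun x => ∑ j, ℓ j x) C := by
  refine .of_dist_le' fun x hx y hy => ?_
  calc dist (∑ j, ℓ j x) (∑ j, ℓ j y) ≤ ∑ j, dist (ℓ j x) (ℓ j y) := dist_sum_sum_le _ _ _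
    _ ≤ ∑ _, Γ * dist x y := by
      gcongr with j
      rw [Real.dist_eq, dist_eq_norm]
      exact hℓ j x hx y hy
    _ = Fintype.card ι * Γ * dist x y := by simp [mul_assoc]

end SumOfLosses

/-- Theorem 5(b) with the adaptive weights made explicit: there is a universal constant
`K > 0` such that, with convex, differentiable, `Γ`-Lipschitz per-example losses on a
compact convex `C` of diameter `D`, adaptive weights
`w i = nᵢ^{-1/4} / √((∑ i', √n_{i'})/(N β̄))`, `T = ⌈(2/d)(∑ nᵢ²)/(∑ 1/wᵢ²)⌉`, independent
standard Gaussian noise, and noisy projected GD with step sizes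
`η i t = D/(Γ √(wᵢ² nᵢ² + T d/2) √t)`, the total excess empirical risk of the final
iterates is at most `K D Γ (1 + log T) √(m d/(N β̄)) ∑ i, √nᵢ`. -/
theorem stmt10 :
    ∃ K : ℝ, 0 < K ∧
      ∀ (d m : ℕ), 1 ≤ d → 1 ≤ m →
      ∀ nn : Fin m → ℕ, (∀ i, 1 ≤ nn i) →
      ∀ N βbar : ℝ, 0 < N → 0 < βbar →
      ∀ Γ : ℝ, 0 < Γ →
      ∀ C : Set (EuclideanSpace ℝ (Fin d)), C.Nonempty → IsCompact C → Convex ℝ C →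
      ∀ D : ℝ, 0 < D → Metric.diam C = D →
      ∀ ℓ : (i : Fin m) → Fin (nn i) → EuclideanSpace ℝ (Fin d) → ℝ,
        (∀ i j, ConvexOn ℝ Set.univ (ℓ i j)) →
        (∀ i j, Differentiable ℝ (ℓ i j)) →
        (∀ i j, ∀ x ∈ C, ∀ y ∈ C, |ℓ i j x - ℓ i j y| ≤ Γ * ‖x - y‖) →
      ∀ θstar : Fin m → EuclideanSpace ℝ (Fin d),
        (∀ i, θstar i ∈ C) → (∀ i, ∀ y ∈ C, (∑ j, ℓ i j (θstar i)) ≤ ∑ j, ℓ i j y) →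
      let w : Fin m → ℝ := fun i =>
        (nn i : ℝ) ^ (-(1 / 4 : ℝ)) /
          Real.sqrt ((∑ i', Real.sqrt (nn i')) / (N * βbar))
      ∀ T : ℕ, T = ⌈(2 / (d : ℝ)) * (∑ i, (nn i : ℝ) ^ 2) / (∑ i, 1 / w i ^ 2)⌉₊ →
      ∀ (Ω : Type) (_ : MeasureSpace Ω), IsProbabilityMeasure (ℙ : Measure Ω) →
      ∀ ξ : Fin m → Fin T → Ω → EuclideanSpace ℝ (Fin d),
        (∀ i t, Measurable (ξ i t)) →
        iIndepFun (m := fun _ => (inferInstance : MeasurableSpace ℝ))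
          (fun p : (Fin m × Fin T) × Fin d => fun ω => ξ p.1.1 p.1.2 ω p.2) ℙ →
        (∀ i t k, Measure.map (fun ω => ξ i t ω k) ℙ = gaussianReal 0 1) →
      ∀ proj : EuclideanSpace ℝ (Fin d) → EuclideanSpace ℝ (Fin d),
        (∀ x, proj x ∈ C ∧ ∀ y ∈ C, ‖x - proj x‖ ≤ ‖x - y‖) →
      ∀ θ : Fin m → ℕ → Ω → EuclideanSpace ℝ (Fin d),
        (∀ i, ∃ θ0 ∈ C, θ i 0 = fun _ => θ0) →
        (∀ i, ∀ t : ℕ, (ht : t < T) →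
          θ i (t + 1) = fun ω =>
            proj (θ i t ω -
              (D / (Γ * Real.sqrt (w i ^ 2 * (nn i : ℝ) ^ 2 + T * d / 2) *
                  Real.sqrt (t + 1))) •
                (w i • gradient (fun x => ∑ j, ℓ i j x) (θ i t ω) +
                  (Γ * Real.sqrt (T / 2)) • ξ i ⟨t, ht⟩ ω))) →
      (∑ i, ∫ ω, (∑ j, ℓ i j (θ i T ω)) ∂(ℙ : Measure Ω)) - (∑ i, ∑ j, ℓ i j (θstar i)) ≤
        K * D * Γ * (1 + Real.log T) * Real.sqrt (m * d / (N * βbar)) *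
          ∑ i, Real.sqrt (nn i) := by
  refine ⟨13 / 2, by norm_num, ?_⟩
  rintro d m hd hm nn hnn N βbar hN hβ Γ hΓ C - hCc hC D hD hdiam ℓ hconv hdiff hlip θstar hθstar
    - w T hT Ω _ hμ ξ hξ hind hlaw proj hproj θ hinit hstep
  have : NeZero m := ⟨by lia⟩
  simpa only [Fintype.card_fin] using stmt10_general (n := fun i => (nn i : ℝ))
    (L := fun i x => ∑ j, ℓ i j x) (fun i => Nat.cast_pos.2 (hnn i)) (mul_pos hN hβ)
    (Nat.cast_pos.2 hd) hΓ hD hCc.isBounded hdiam.le hproj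
    (fun i => convexOn_finsetSum hC _ fun j _ => (hconv i j).subset (Set.subset_univ C) hC)
    (fun i => by simpa using lipschitzOnWith_sum (hlip i))
    (fun i x _ => (Differentiable.fun_sum fun j _ => hdiff i j) x) hθstar rfl hT
    (by simpa only [Fintype.card_fin] using
      isMartingaleNoise_of_iIndepFun_gaussianReal hξ hind hlaw)
    (fun i => ⟨hinit i, hstep i⟩)
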